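/- Define Q = ((∏_{j=1}^{n−1} k_j) (Σ_{j=1}^n m_j) g) / (∏_{j=1}^n m_j). Then as t → 0 the bottom mass position satisfies z_n(t) ∼ −Q t^{2n}/(2n)!; precisely, z_n(t) + Q t^{2n}/(2n)! = o(t^{2n}) as t → 0. -/

import Mathlib

/-!
Each mass is driven by the one above it, so the fall reaches mass `j` only at order `t ^ (2 * j)`:
if the masses from the `(i + 1)`-st on are `o(t ^ (2 * i))`, those from the `(i + 2)`-nd on have
acceleration `o(t ^ (2 * i))`, hence are themselves `o(t ^ (2 * i + 2))`. At the leading order the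
masses from the `j`-th on are therefore negligible in the equation of the `j`-th one, which becomes
`m_j z_j'' = k_{j-1} z_{j-1} + o(t ^ (2 * j - 2))`; integrating twice multiplies the leading
coefficient by `k_{j-1} / m_j`.
-/

section

open Filter Topology Asymptotics Finset
open scoped Nat

theorem isBigO_sum_norm_of_mem {ι α E : Type*} [SeminormedAddCommGroup E] {l : Filter α}
    {s : Finset ι} {x : ι → α → E} {i : ι} (hi : i ∈ s) : x i =O[l] fun t => ∑ i ∈ s, ‖x i t‖ :=
  .of_norm_le fun t => single_le_sum (f := fun i => ‖x i t‖) (fun _ _ => norm_nonneg _) hi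

variable {E : Type*} [NormedAddCommGroup E] [NormedSpace ℝ E]

/-- The expansion `x t = (t ^ p / p!) • c + o(t ^ p)` as `t → 0`. The coefficient `c` may vanish,
and then this says `x t = o(t ^ p)`. The factorial makes `c` invariant under integration. -/
def HasMonomialApprox (x : ℝ → E) (p : ℕ) (c : E) : Prop :=
  (fun t => x t - (t ^ p / p ! : ℝ) • c) =o[𝓝 0] fun t => t ^ p

/-- A motion that is twice differentiable near time `0`, at which its position and its velocity
vanish. -/
structure StartsAtRest (x : ℝ → E) : Prop where
  differentiableAt : ∀ᶠ t in 𝓝 0, DifferentiableAt ℝ x t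
  differentiableAt_deriv : ∀ᶠ t in 𝓝 0, DifferentiableAt ℝ (deriv x) t
  apply_zero : x 0 = 0
  deriv_zero : deriv x 0 = 0

theorem hasDerivAt_pow_succ_div_factorial (p : ℕ) (t : ℝ) :
    HasDerivAt (fun t : ℝ => t ^ (p + 1) / (p + 1)!) (t ^ p / p !) t := by
  refine ((hasDerivAt_pow (p + 1) t).div_const ((p + 1)! : ℝ)).congr_deriv ?_
  rw [Nat.factorial_succ, Nat.add_sub_cancel]
  push_cast
  field_simp

namespace HasMonomialApprox

variable {x y : ℝ → E} {p : ℕ} {c d : E}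

theorem zero_right_iff : HasMonomialApprox x p 0 ↔ x =o[𝓝 0] fun t => t ^ p := by
  simp [HasMonomialApprox]

theorem zero_order_iff : HasMonomialApprox x 0 c ↔ Tendsto x (𝓝 0) (𝓝 c) := by
  simp [HasMonomialApprox, isLittleO_one_iff, tendsto_sub_nhds_zero_iff]

theorem add (hx : HasMonomialApprox x p c) (hy : HasMonomialApprox y p d) :
    HasMonomialApprox (fun t => x t + y t) p (c + d) :=
  (IsLittleO.add hx hy).congr_left fun t => by rw [smul_add, add_sub_add_comm]

theorem const_smul (hx : HasMonomialApprox x p c) (a : ℝ) :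
    HasMonomialApprox (fun t => a • x t) p (a • c) :=
  (IsLittleO.const_smul_left hx a).congr_left fun t => by rw [Pi.smul_apply, smul_sub, smul_comm a]

theorem of_deriv (hdiff : ∀ᶠ t in 𝓝 0, DifferentiableAt ℝ x t) (h0 : x 0 = 0)
    (h : HasMonomialApprox (deriv x) p c) : HasMonomialApprox x (p + 1) c := by
  obtain ⟨ε, hε, hball⟩ := Metric.eventually_nhds_iff_ball.1 hdiff
  have hnhds : 𝓝[Metric.ball 0 ε] (0 : ℝ) = 𝓝 0 :=
    Metric.isOpen_ball.nhdsWithin_eq (Metric.mem_ball_self hε)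
  have hremainder : ∀ t ∈ Metric.ball (0 : ℝ) ε,
      HasDerivWithinAt (fun t => x t - (t ^ (p + 1) / (p + 1)! : ℝ) • c)
        (deriv x t - (t ^ p / p ! : ℝ) • c) (Metric.ball 0 ε) t := fun t ht =>
    ((hball t ht).hasDerivAt.sub
      ((hasDerivAt_pow_succ_div_factorial p t).smul_const c)).hasDerivWithinAt
  have hint := (convex_ball (0 : ℝ) ε).isLittleO_pow_succ_real (n := p)
    (Metric.mem_ball_self hε) hremainder (by simpa [HasMonomialApprox, hnhds] using h)
  simpa [HasMonomialApprox, hnhds, h0] using hint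

end HasMonomialApprox

namespace StartsAtRest

variable {x : ℝ → E} {p : ℕ} {c : E}

theorem of_contDiff (hx : ContDiff ℝ 2 x) (h0 : x 0 = 0) (h0' : deriv x 0 = 0) :
    StartsAtRest x where
  differentiableAt := .of_forall (hx.differentiable two_ne_zero)
  differentiableAt_deriv := .of_forall hx.differentiable_deriv_two
  apply_zero := h0
  deriv_zero := h0'

theorem tendsto_zero (hx : StartsAtRest x) : Tendsto x (𝓝 0) (𝓝 0) := by
  simpa [hx.apply_zero] using hx.differentiableAt.self_of_nhds.continuousAt.tendsto

theorem hasMonomialApprox_add_two (hx : StartsAtRest x)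
    (h : HasMonomialApprox (deriv (deriv x)) p c) : HasMonomialApprox x (p + 2) c :=
  .of_deriv hx.differentiableAt hx.apply_zero
    (.of_deriv hx.differentiableAt_deriv hx.deriv_zero h)

end StartsAtRest

/-- A chain of motions `x 1, …, x n` starting at rest in which each `x (j + 1)` is accelerated by
its predecessor with gain `a j`, up to a feedback bounded by a multiple of
`‖x (j + 1)‖ + ⋯ + ‖x n‖`. The acceleration of `x 1` is left free. -/
structure IsCascade (n : ℕ) (a : ℕ → ℝ) (x : ℕ → ℝ → E) : Prop where
  startsAtRest : ∀ j, 1 ≤ j → j ≤ n → StartsAtRest (x j)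
  feedback : ∀ j, 1 ≤ j → j < n → (fun t => deriv (deriv (x (j + 1))) t - a j • x j t)
    =O[𝓝 0] fun t => ∑ i ∈ Icc (j + 1) n, ‖x i t‖

namespace IsCascade

variable {n : ℕ} {a : ℕ → ℝ} {x : ℕ → ℝ → E} {c : E} {j p : ℕ}

theorem hasMonomialApprox_succ (h : IsCascade n a x) (hj : 1 ≤ j) (hjn : j < n)
    (hx : HasMonomialApprox (x j) p c)
    (hlow : ∀ i, j < i → i ≤ n → x i =o[𝓝 0] fun t => t ^ p) :
    HasMonomialApprox (x (j + 1)) (p + 2) (a j • c) := by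
  have hfeedback : HasMonomialApprox
      (fun t => deriv (deriv (x (j + 1))) t - a j • x j t) p 0 :=
    HasMonomialApprox.zero_right_iff.2 <| (h.feedback j hj hjn).trans_isLittleO <|
      .fun_sum fun i hi => (hlow i (mem_Icc.1 hi).1 (mem_Icc.1 hi).2).norm_left
  exact (h.startsAtRest (j + 1) (by omega) hjn).hasMonomialApprox_add_two
    (by simpa using hfeedback.add (hx.const_smul (a j)))

theorem isLittleO_pow (h : IsCascade n a x) {i : ℕ} (hij : i < j) (hjn : j ≤ n) :
    x j =o[𝓝 0] fun t => t ^ (2 * i) := by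
  induction i generalizing j with
  | zero => simpa [isLittleO_one_iff] using (h.startsAtRest j hij hjn).tendsto_zero
  | succ i ih =>
    obtain ⟨j, rfl⟩ : ∃ l, j = l + 1 := ⟨j - 1, by omega⟩
    have hprev : HasMonomialApprox (x j) (2 * i) 0 :=
      HasMonomialApprox.zero_right_iff.2 (ih (by omega) (by omega))
    have hnext := h.hasMonomialApprox_succ (by omega) hjn hprev
      fun l hjl hln => ih (by omega) hln
    rw [smul_zero] at hnext
    exact HasMonomialApprox.zero_right_iff.1 hnext

theorem hasMonomialApprox (h : IsCascade n a x)
    (hc : Tendsto (deriv (deriv (x 1))) (𝓝 0) (𝓝 c)) (hj : 1 ≤ j) (hjn : j ≤ n) :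
    HasMonomialApprox (x j) (2 * j) ((∏ i ∈ Ico 1 j, a i) • c) := by
  induction j, hj using Nat.le_induction with
  | base =>
    simpa using (h.startsAtRest 1 le_rfl hjn).hasMonomialApprox_add_two
      (HasMonomialApprox.zero_order_iff.2 hc)
  | succ j hj ih =>
    rw [prod_Ico_succ_top hj, mul_comm _ (a j), mul_smul]
    exact h.hasMonomialApprox_succ hj hjn (ih (by omega))
      fun i hji hin => h.isLittleO_pow hji hin

end IsCascade

/-- Newton's equations, near time `0`, for a chain of masses `m 1, …, m n` in which a spring of
stiffness `k j` joins masses `j` and `j + 1` and an extra constant force `-F` acts on the first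
mass. Since `z j` is a displacement from equilibrium, natural lengths and weights drop out;
releasing a hanging chain removes the force that carried its total weight `F`. -/
structure IsSpringChain (n : ℕ) (m k : ℕ → ℝ) (F : E) (z : ℕ → ℝ → E) : Prop where
  top : ∀ᶠ t in 𝓝 0, m 1 • deriv (deriv (z 1)) t = k 1 • (z 2 t - z 1 t) - F
  middle : ∀ j, 2 ≤ j → j ≤ n - 1 → ∀ᶠ t in 𝓝 0, m j • deriv (deriv (z j)) t =
    k (j - 1) • (z (j - 1) t - z j t) + k j • (z (j + 1) t - z j t)
  bottom : ∀ᶠ t in 𝓝 0, m n • deriv (deriv (z n)) t = k (n - 1) • (z (n - 1) t - z n t)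

namespace IsSpringChain

variable {n : ℕ} {m k : ℕ → ℝ} {F : E} {z : ℕ → ℝ → E}

theorem isCascade (h : IsSpringChain n m k F z) (hm : ∀ j, 1 ≤ j → j ≤ n → m j ≠ 0)
    (hz : ∀ j, 1 ≤ j → j ≤ n → StartsAtRest (z j)) :
    IsCascade n (fun j => k j / m (j + 1)) z where
  startsAtRest := hz
  feedback j hj hjn := by
    have hmj : m (j + 1) ≠ 0 := hm _ (by omega) hjn
    have hself : z (j + 1) =O[𝓝 0] fun t => ∑ i ∈ Icc (j + 1) n, ‖z i t‖ :=
      isBigO_sum_norm_of_mem (mem_Icc.2 (by omega))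
    obtain hjn | rfl := (show j + 1 ≤ n from hjn).lt_or_eq
    · have hnext : z (j + 2) =O[𝓝 0] fun t => ∑ i ∈ Icc (j + 1) n, ‖z i t‖ :=
        isBigO_sum_norm_of_mem (mem_Icc.2 (by omega))
      refine ((hnext.sub hself).const_smul_left (k (j + 1) / m (j + 1)) |>.sub
        (hself.const_smul_left (k j / m (j + 1)))).congr' ?_ .rfl
      filter_upwards [h.middle (j + 1) (by omega) (by omega)] with t ht
      rw [Nat.add_sub_cancel] at ht
      rw [(eq_inv_smul_iff₀ hmj).2 ht]
      simp only [Pi.smul_apply]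
      module
    · refine (hself.const_smul_left (-(k j / m (j + 1)))).congr' ?_ .rfl
      filter_upwards [h.bottom] with t ht
      rw [Nat.add_sub_cancel] at ht
      rw [(eq_inv_smul_iff₀ hmj).2 ht]
      simp only [Pi.smul_apply]
      module

theorem tendsto_deriv_deriv_top (h : IsSpringChain n m k F z) (hm : m 1 ≠ 0)
    (h1 : StartsAtRest (z 1)) (h2 : StartsAtRest (z 2)) :
    Tendsto (deriv (deriv (z 1))) (𝓝 0) (𝓝 (-((m 1)⁻¹ • F))) := by
  have hlim : Tendsto (fun t => (m 1)⁻¹ • (k 1 • (z 2 t - z 1 t) - F)) (𝓝 0)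
      (𝓝 ((m 1)⁻¹ • (k 1 • (0 - 0) - F))) :=
    (((h2.tendsto_zero.sub h1.tendsto_zero).const_smul (k 1)).sub_const F).const_smul (m 1)⁻¹
  rw [sub_zero, smul_zero, zero_sub, smul_neg] at hlim
  refine hlim.congr' ?_
  filter_upwards [h.top] with t ht
  exact ((eq_inv_smul_iff₀ hm).2 ht).symm

end IsSpringChain

theorem prod_Ico_div_succ_div {K : Type*} [Field K] {n : ℕ} (hn : 1 ≤ n) (m k : ℕ → K) :
    (∏ j ∈ Ico 1 n, k j / m (j + 1)) / m 1 =
      (∏ j ∈ Icc 1 (n - 1), k j) / ∏ j ∈ Icc 1 n, m j := by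
  rw [prod_div_distrib, prod_Ico_add' m 1 n 1, div_div, ← Ico_add_one_right_eq_Icc 1 (n - 1),
    Nat.sub_add_cancel hn, ← Ico_add_one_right_eq_Icc 1 n,
    prod_eq_prod_Ico_succ_bot (show 1 < n + 1 by omega) m, mul_comm (m 1)]

theorem dimensional_bottom_mass_short_time_general {n : ℕ} (hn : 2 ≤ n) {m k : ℕ → ℝ} {F : E}
    {z : ℕ → ℝ → E} (hm : ∀ j, 1 ≤ j → j ≤ n → m j ≠ 0) (h : IsSpringChain n m k F z)
    (hz : ∀ j, 1 ≤ j → j ≤ n → StartsAtRest (z j)) :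
    (fun t => z n t + (t ^ (2 * n) / (2 * n)! : ℝ) •
      ((∏ j ∈ Icc 1 (n - 1), k j) / ∏ j ∈ Icc 1 n, m j) • F) =o[𝓝 0] fun t => t ^ (2 * n) := by
  have htop := h.tendsto_deriv_deriv_top (hm 1 le_rfl (by omega)) (hz 1 le_rfl (by omega))
    (hz 2 one_le_two hn)
  have happrox := (h.isCascade hm hz).hasMonomialApprox htop (by omega : 1 ≤ n) le_rfl
  rw [smul_neg, smul_smul, ← div_eq_mul_inv, prod_Ico_div_succ_div (by omega)] at happrox
  exact IsLittleO.congr_left happrox fun t => by rw [smul_neg, sub_neg_eq_add]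

end

/-- with Q = ((∏ k_j)(Σ m_j) g)/(∏ m_j), one has z_n(t) + Q t^(2n)/(2n)! = o(t^(2n)) as t → 0. -/
theorem dimensional_bottom_mass_short_time
    (n : ℕ) (hn : 2 ≤ n) (m k : ℕ → ℝ) (g : ℝ)
    (hm : ∀ j, 1 ≤ j → j ≤ n → 0 < m j)
    (hk : ∀ j, 1 ≤ j → j ≤ n - 1 → 0 < k j)
    (hg : 0 < g)
    (z : ℕ → ℝ → ℝ)
    (hsmooth : ∀ j, 1 ≤ j → j ≤ n → ContDiff ℝ (⊤ : ℕ∞) (z j))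
    (heq1 : ∀ t : ℝ, m 1 * deriv (deriv (z 1)) t =
      k 1 * (z 2 t - z 1 t) - (∑ j ∈ Finset.Icc 1 n, m j) * g)
    (heqj : ∀ j, 2 ≤ j → j ≤ n - 1 → ∀ t : ℝ, m j * deriv (deriv (z j)) t =
      k (j - 1) * (z (j - 1) t - z j t) + k j * (z (j + 1) t - z j t))
    (heqn : ∀ t : ℝ, m n * deriv (deriv (z n)) t = k (n - 1) * (z (n - 1) t - z n t))
    (hz0 : ∀ j, 1 ≤ j → j ≤ n → z j 0 = 0)
    (hz0' : ∀ j, 1 ≤ j → j ≤ n → deriv (z j) 0 = 0) :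
    (fun t : ℝ => z n t +
      (((∏ j ∈ Finset.Icc 1 (n - 1), k j) * (∑ j ∈ Finset.Icc 1 n, m j) * g) /
        ∏ j ∈ Finset.Icc 1 n, m j) * t ^ (2 * n) / (Nat.factorial (2 * n)))
      =o[nhds (0 : ℝ)] fun t : ℝ => t ^ (2 * n) := by
  have hchain : IsSpringChain n m k ((∑ j ∈ Finset.Icc 1 n, m j) * g) z :=
    ⟨.of_forall heq1, fun j h2 hjn => .of_forall (heqj j h2 hjn), .of_forall heqn⟩
  refine (dimensional_bottom_mass_short_time_general hn (fun j h1 hjn => (hm j h1 hjn).ne') hchain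
    fun j h1 hjn => .of_contDiff ((hsmooth j h1 hjn).of_le (WithTop.coe_le_coe.2 le_top))
      (hz0 j h1 hjn) (hz0' j h1 hjn)).congr_left fun t => ?_
  rw [smul_eq_mul, smul_eq_mul]
  ring
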